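/- arXiv:2212.02640 — 4 statements merged into one kernel-verified Lean document; each statement's English description precedes it below -/
import Mathlib

section
/- For all natural numbers j, a, b, x, y with x < 2^j and y < 2^j, the bit-interleaving (z-order) map Z satisfies Z (a * 2^j + x) (b * 2^j + y) = 4^j * Z a b + Z x y. -/
/-- The bit-interleaving (z-order) map: the binary expansion of `Z x y` interleaves
the bits of `y` and `x`, with the bits of `x` in the even positions and the bits of
`y` in the odd positions.  The sum is finite since all sufficiently high bits vanish. -/
noncomputable def Z (x y : ℕ) : ℕ :=
  ∑ᶠ i : ℕ, (x / 2 ^ i % 2 * 4 ^ i + y / 2 ^ i % 2 * 2 * 4 ^ i)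

theorem Z_eq_sum_range {n x y : ℕ} (hx : x < 2 ^ n) (hy : y < 2 ^ n) :
    Z x y = ∑ i ∈ Finset.range n, (x / 2 ^ i % 2 * 4 ^ i + y / 2 ^ i % 2 * 2 * 4 ^ i) := by
  refine finsum_eq_sum_of_support_subset _ fun i hi => ?_
  by_contra hn
  have hni : 2 ^ n ≤ 2 ^ i := Nat.pow_le_pow_right two_pos (by simpa using hn)
  exact hi (by simp [Nat.div_eq_of_lt (hx.trans_le hni), Nat.div_eq_of_lt (hy.trans_le hni)])

theorem mul_two_pow_add_div_two_pow_mod_two {i j : ℕ} (h : i < j) (a x : ℕ) :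
    (a * 2 ^ j + x) / 2 ^ i % 2 = x / 2 ^ i % 2 := by
  obtain ⟨k, rfl⟩ := Nat.exists_eq_add_of_lt h
  have e : a * 2 ^ (i + k + 1) + x = x + 2 ^ i * (2 * (a * 2 ^ k)) := by ring
  rw [e, Nat.add_mul_div_left _ _ (by positivity), Nat.add_mul_mod_self_left]

theorem mul_two_pow_add_div_two_pow_add {j x : ℕ} (hx : x < 2 ^ j) (a i : ℕ) :
    (a * 2 ^ j + x) / 2 ^ (j + i) = a / 2 ^ i := by
  rw [pow_add, ← Nat.div_div_eq_div_mul, add_comm, Nat.add_mul_div_right _ _ (by positivity),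
    Nat.div_eq_of_lt hx, zero_add]

theorem mul_two_pow_add_lt_two_pow_add {a j n x : ℕ} (ha : a < 2 ^ n) (hx : x < 2 ^ j) :
    a * 2 ^ j + x < 2 ^ (j + n) := by
  calc a * 2 ^ j + x < (a + 1) * 2 ^ j := by rw [add_one_mul]; gcongr
    _ ≤ 2 ^ n * 2 ^ j := Nat.mul_le_mul_right _ ha
    _ = 2 ^ (j + n) := by rw [add_comm, pow_add]

/-- The z-order map splits over aligned blocks: the high bits contribute a multiple
of `4^j` and the low bits contribute `Z x y`. -/
theorem zorder_split (j a b x y : ℕ) (hx : x < 2 ^ j) (hy : y < 2 ^ j) :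
    Z (a * 2 ^ j + x) (b * 2 ^ j + y) = 4 ^ j * Z a b + Z x y := by
  have ha : a < 2 ^ (a + b) :=
    Nat.lt_two_pow_self.trans_le (Nat.pow_le_pow_right two_pos (Nat.le_add_right a b))
  have hb : b < 2 ^ (a + b) :=
    Nat.lt_two_pow_self.trans_le (Nat.pow_le_pow_right two_pos (Nat.le_add_left b a))
  rw [Z_eq_sum_range (mul_two_pow_add_lt_two_pow_add ha hx) (mul_two_pow_add_lt_two_pow_add hb hy),
    Z_eq_sum_range ha hb, Z_eq_sum_range hx hy, Finset.sum_range_add, add_comm, Finset.mul_sum]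
  congr 1
  · refine Finset.sum_congr rfl fun i _ => ?_
    rw [mul_two_pow_add_div_two_pow_add hx, mul_two_pow_add_div_two_pow_add hy]
    ring
  · refine Finset.sum_congr rfl fun i hi => ?_
    have hij := Finset.mem_range.mp hi
    rw [mul_two_pow_add_div_two_pow_mod_two hij, mul_two_pow_add_div_two_pow_mod_two hij]
end

section
/- Let c, p, q be points of the Euclidean plane with p ≠ c and q ≠ c. If the angle ∠ p c q at the vertex c is strictly less than π/3, then dist p q < max (dist p c) (dist q c); that is, one of p, q is strictly closer to the other than it is to c. -/
open EuclideanGeometry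

/-- If the angle `∠ p c q` at `c` is strictly less than `π / 3`, then one of
`p`, `q` is strictly closer to the other than it is to `c`. -/
theorem dist_lt_max_of_angle_lt_pi_div_three
    (c p q : EuclideanSpace ℝ (Fin 2)) (hp : p ≠ c) (hq : q ≠ c)
    (h : ∠ p c q < Real.pi / 3) :
    dist p q < max (dist p c) (dist q c) := by
  have ha : 0 < dist p c := dist_pos.mpr hp
  have hb : 0 < dist q c := dist_pos.mpr hq
  have hcos : 1 / 2 < Real.cos (∠ p c q) := by
    rw [← Real.cos_pi_div_three]
    exact Real.cos_lt_cos_of_nonneg_of_le_pi (angle_nonneg p c q)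
      (by linarith [Real.pi_pos]) h
  have hlaw := dist_sq_eq_dist_sq_add_dist_sq_sub_two_mul_dist_mul_dist_mul_cos_angle p c q
  have hprod := mul_lt_mul_of_pos_left hcos (mul_pos ha hb)
  rcases le_total (dist p c) (dist q c) with hab | hab
  · exact lt_max_of_lt_right (lt_of_mul_self_lt_mul_self₀ hb.le
      (by linarith [mul_le_mul_of_nonneg_left hab ha.le]))
  · exact lt_max_of_lt_left (lt_of_mul_self_lt_mul_self₀ ha.le
      (by linarith [mul_le_mul_of_nonneg_right hab hb.le]))
end

section
/- Let c be a point of the Euclidean plane and let p₁, p₂, p₃ be three points, each lying in the closed quadrant Q(c) = {v : c.1 ≤ v.1 and c.2 ≤ v.2} and each distinct from c. Then there exist indices i ≠ j such that the angle ∠ pᵢ c pⱼ at the vertex c is at most π/4. -/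
open EuclideanGeometry

/-- Nonzero plane vectors whose determinant is bounded in absolute value by their inner product
form an angle of at most `π / 4`. -/
lemma angle_le_pi_div_four_of_abs_det_le {u v : EuclideanSpace ℝ (Fin 2)}
    (hu : u ≠ 0) (hv : v ≠ 0) (h : |u 0 * v 1 - u 1 * v 0| ≤ u 0 * v 0 + u 1 * v 1) :
    InnerProductGeometry.angle u v ≤ Real.pi / 4 := by
  have hinner : inner ℝ u v = u 0 * v 0 + u 1 * v 1 := by
    simp [PiLp.inner_apply, Fin.sum_univ_two, mul_comm]
  have hu2 : ‖u‖ ^ 2 = u 0 ^ 2 + u 1 ^ 2 := by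
    simp [EuclideanSpace.norm_sq_eq, Fin.sum_univ_two]
  have hv2 : ‖v‖ ^ 2 = v 0 ^ 2 + v 1 ^ 2 := by
    simp [EuclideanSpace.norm_sq_eq, Fin.sum_univ_two]
  have hpos : 0 < ‖u‖ * ‖v‖ := mul_pos (norm_pos_iff.mpr hu) (norm_pos_iff.mpr hv)
  have hsq := sq_le_sq' (neg_le_of_abs_le h) (le_of_abs_le h)
  rw [InnerProductGeometry.angle, Real.arccos_le_pi_div_four, hinner, le_div_iff₀ hpos]
  refine le_of_sq_le_sq ?_ ((abs_nonneg _).trans h)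
  rw [mul_pow, mul_pow, div_pow, Real.sq_sqrt zero_le_two, hu2, hv2]
  linarith

/-- Two nonzero vectors of the first quadrant lying on the same side of the diagonal form an
angle of at most `π / 4`. -/
lemma angle_le_pi_div_four_of_same_octant {u v : EuclideanSpace ℝ (Fin 2)}
    (hu : u ≠ 0) (hv : v ≠ 0) (hu0 : 0 ≤ u 0) (hu1 : 0 ≤ u 1) (hv0 : 0 ≤ v 0) (hv1 : 0 ≤ v 1)
    (h : u 0 ≤ u 1 ↔ v 0 ≤ v 1) :
    InnerProductGeometry.angle u v ≤ Real.pi / 4 := by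
  refine angle_le_pi_div_four_of_abs_det_le hu hv (abs_le.mpr ?_)
  rcases le_or_gt (u 0) (u 1) with hle | hlt
  · have hle' := h.mp hle
    constructor <;> nlinarith [mul_nonneg hu0 hv0, mul_nonneg hu0 hv1, mul_nonneg hu1 hv0,
      mul_nonneg hu0 (sub_nonneg.mpr hle'), mul_nonneg hu1 (sub_nonneg.mpr hle'),
      mul_nonneg hv0 (sub_nonneg.mpr hle), mul_nonneg hv1 (sub_nonneg.mpr hle)]
  · have hlt' : v 1 < v 0 := not_le.mp fun hv => hlt.not_ge (h.mpr hv)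
    constructor <;> nlinarith [mul_nonneg hu1 hv1, mul_nonneg hu0 hv1, mul_nonneg hu1 hv0,
      mul_nonneg hu0 (sub_nonneg.mpr hlt'.le), mul_nonneg hu1 (sub_nonneg.mpr hlt'.le),
      mul_nonneg hv0 (sub_nonneg.mpr hlt.le), mul_nonneg hv1 (sub_nonneg.mpr hlt.le)]

/-- Among any three points of the closed upper-right quadrant at `c`, each distinct
from `c`, two of them subtend an angle at most `π / 4` at `c`. -/
theorem exists_angle_le_pi_div_four_of_three_in_quadrant
    (c : EuclideanSpace ℝ (Fin 2)) (p : Fin 3 → EuclideanSpace ℝ (Fin 2))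
    (hquad : ∀ i, c 0 ≤ p i 0 ∧ c 1 ≤ p i 1) (hne : ∀ i, p i ≠ c) :
    ∃ i j : Fin 3, i ≠ j ∧ ∠ (p i) c (p j) ≤ Real.pi / 4 := by
  obtain ⟨i, j, hij, hside⟩ := Fintype.exists_ne_map_eq_of_card_lt
    (fun i => (p i - c) 0 ≤ (p i - c) 1) (by simp)
  have h0 (k : Fin 3) : 0 ≤ (p k - c) 0 := sub_nonneg.mpr (hquad k).1
  have h1 (k : Fin 3) : 0 ≤ (p k - c) 1 := sub_nonneg.mpr (hquad k).2
  exact ⟨i, j, hij, angle_le_pi_div_four_of_same_octant (sub_ne_zero.mpr (hne i))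
    (sub_ne_zero.mpr (hne j)) (h0 i) (h1 i) (h0 j) (h1 j) (iff_of_eq hside)⟩
end

section
/- Let c be a point of the Euclidean plane and let S be a set of points, each lying in the closed quadrant Q(c) = {v : c.1 ≤ v.1 and c.2 ≤ v.2} and each distinct from c, such that every point of S is strictly closer to c than to any other point of S (i.e., for all p, q ∈ S with p ≠ q, dist p c < dist p q). Then S has at most 2 elements. -/
/-- Two vectors `(a, b)` and `(x, y)` in the octant `0 ≤ y ≤ x` cannot both be shorter than
their difference. -/
lemma not_both_sq_lt_sq_sub_of_octant {a b x y : ℝ} (hb : 0 ≤ b) (hy : 0 ≤ y) (hba : b ≤ a)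
    (hyx : y ≤ x) (h₁ : a ^ 2 + b ^ 2 < (a - x) ^ 2 + (b - y) ^ 2)
    (h₂ : x ^ 2 + y ^ 2 < (x - a) ^ 2 + (y - b) ^ 2) : False := by
  rcases le_total x a with h | h <;>
    nlinarith [mul_nonneg hb hy, mul_self_le_mul_self hy hyx, mul_self_le_mul_self hb hba,
      mul_nonneg (hy.trans hyx) (sub_nonneg.2 h), mul_nonneg (hb.trans hba) (sub_nonneg.2 h)]

lemma EuclideanSpace.dist_lt_dist_iff_fin_two {p q r s : EuclideanSpace ℝ (Fin 2)} :
    dist p q < dist r s ↔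
      (p 0 - q 0) ^ 2 + (p 1 - q 1) ^ 2 < (r 0 - s 0) ^ 2 + (r 1 - s 1) ^ 2 := by
  rw [EuclideanSpace.dist_eq, EuclideanSpace.dist_eq, Real.sqrt_lt_sqrt_iff (by positivity)]
  simp [Fin.sum_univ_two, Real.dist_eq, sq_abs]

/-- If every point of a set `S`, contained in the closed quadrant at `c` and
avoiding `c`, is strictly closer to `c` than to any other point of `S`, then
`S` has at most two elements. -/
theorem quadrant_special_points_le_two
    (c : EuclideanSpace ℝ (Fin 2)) (S : Set (EuclideanSpace ℝ (Fin 2)))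
    (hquad : ∀ p ∈ S, c 0 ≤ p 0 ∧ c 1 ≤ p 1)
    (hne : ∀ p ∈ S, p ≠ c)
    (hclose : ∀ p ∈ S, ∀ q ∈ S, p ≠ q → dist p c < dist p q) :
    S.encard ≤ 2 := by
  have below : {p ∈ S | p 1 - c 1 ≤ p 0 - c 0}.Subsingleton := by
    rintro p ⟨hp, hp'⟩ q ⟨hq, hq'⟩
    by_contra hpq
    have h₁ := EuclideanSpace.dist_lt_dist_iff_fin_two.1 (hclose p hp q hq hpq)
    have h₂ := EuclideanSpace.dist_lt_dist_iff_fin_two.1 (hclose q hq p hp (Ne.symm hpq))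
    exact not_both_sq_lt_sq_sub_of_octant (sub_nonneg.2 (hquad p hp).2)
      (sub_nonneg.2 (hquad q hq).2) hp' hq' (by linarith) (by linarith)
  have above : {p ∈ S | p 0 - c 0 ≤ p 1 - c 1}.Subsingleton := by
    rintro p ⟨hp, hp'⟩ q ⟨hq, hq'⟩
    by_contra hpq
    have h₁ := EuclideanSpace.dist_lt_dist_iff_fin_two.1 (hclose p hp q hq hpq)
    have h₂ := EuclideanSpace.dist_lt_dist_iff_fin_two.1 (hclose q hq p hp (Ne.symm hpq))
    exact not_both_sq_lt_sq_sub_of_octant (sub_nonneg.2 (hquad p hp).1)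
      (sub_nonneg.2 (hquad q hq).1) hp' hq' (by linarith) (by linarith)
  calc S.encard
      ≤ ({p ∈ S | p 1 - c 1 ≤ p 0 - c 0} ∪ {p ∈ S | p 0 - c 0 ≤ p 1 - c 1}).encard :=
        Set.encard_le_encard fun p hp =>
          (le_total (p 1 - c 1) (p 0 - c 0)).imp (And.intro hp) (And.intro hp)
    _ ≤ _ := Set.encard_union_le _ _
    _ ≤ 1 + 1 := add_le_add (Set.encard_le_one_iff_subsingleton.2 below)
        (Set.encard_le_one_iff_subsingleton.2 above)
    _ = 2 := one_add_one_eq_two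
end
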